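/- Under assumptions (A1)-(A3), the OS-EM iterates x_k satisfy, for every k in N, d( x_{k+1}, x_k ) <= f_{[k]}( x_k ) - f_{[k]}( x_{k+1} ), where [k] = k mod N. -/

import Mathlib

/-!
Write `x' = x q` with `q = A*(y / A x)` for one EM step. Two facts give the bound.

* Mass is preserved: Fubini in the form `∫ z · A u = ∫ u · A* z` (`integral_mul_opA`), together with
  `A* 1 = 1`, shows `∫ A u = ∫ u`; with `z = y / A x` it shows `∫ x' = ∫ y = 1`. Hence the linear
  terms of all three Kullback-Leibler distances cancel, and the claim reduces to
  `∫ x' log q ≤ ∫ y log (A x' / A x)`.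
* By Jensen's inequality for the probability density `a(s,·) x / (A x)(s)`, one has
  `A (x log q) ≤ A x · log (A x' / A x)` (`opA_mul_log_le`). Multiplying by `y / A x`, integrating
  over `s`, and moving `A` to the other side by the same Fubini identity gives that inequality.

The bounds `m ≤ a ≤ M` keep `A x` in `[m, M]` and `q` in `[m / M, M / m]`, which together
with the bound on `y` makes every integrand above integrable. The step maps the simplex to itself,
and induction covers all iterates.
-/

open MeasureTheory Real Filter

/-- The Kullback-Leibler distance `d(v,u) = ∫ [ v ln(v/u) - v + u ]`
(with the conventions `0 ln 0 = 0`). -/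
noncomputable def KL {α : Type*} [MeasurableSpace α] (μ : Measure α) (v u : α → ℝ) : ℝ :=
  ∫ t, (v t * Real.log (v t / u t) - v t + u t) ∂μ

/-- The Fredholm integral operator `(A x)(s) = ∫_Ω a(s,t) x(t) dt`. -/
noncomputable def opA {d : ℕ} (Ω : Set (Fin d → ℝ)) (a : (Fin d → ℝ) → (Fin d → ℝ) → ℝ)
    (x : (Fin d → ℝ) → ℝ) : (Fin d → ℝ) → ℝ :=
  fun s => ∫ t in Ω, a s t * x t

/-- The adjoint operator `(A* w)(t) = ∫_Σ a(s,t) w(s) ds`. -/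
noncomputable def opAstar {d : ℕ} (S : Set (Fin d → ℝ)) (a : (Fin d → ℝ) → (Fin d → ℝ) → ℝ)
    (w : (Fin d → ℝ) → ℝ) : (Fin d → ℝ) → ℝ :=
  fun t => ∫ s in S, a s t * w s

/-- One EM step `P(x) = x · A*( y / (A x) )`. -/
noncomputable def emStep {d : ℕ} (Ω S : Set (Fin d → ℝ))
    (a : (Fin d → ℝ) → (Fin d → ℝ) → ℝ) (y x : (Fin d → ℝ) → ℝ) : (Fin d → ℝ) → ℝ :=
  fun t => x t * opAstar S a (fun s => y s / opA Ω a x s) t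

/-- Membership in `Δ = { x ∈ L¹(Ω) : x ≥ 0, ∫_Ω x = 1 }`. -/
def InDelta {d : ℕ} (Ω : Set (Fin d → ℝ)) (x : (Fin d → ℝ) → ℝ) : Prop :=
  Integrable x (volume.restrict Ω) ∧ (0 ≤ᵐ[volume.restrict Ω] x) ∧ (∫ t in Ω, x t) = 1

lemma integral_sub_add {α : Type*} [MeasurableSpace α] {μ : Measure α} {f g h : α → ℝ}
    (hf : Integrable f μ) (hg : Integrable g μ) (hh : Integrable h μ) :
    ∫ t, (f t - g t + h t) ∂μ = ∫ t, f t ∂μ - ∫ t, g t ∂μ + ∫ t, h t ∂μ := by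
  have e := integral_add (hf.sub hg) hh
  simp only [Pi.sub_apply] at e
  rw [e, integral_sub hf hg]

section Kernel

variable {d : ℕ} {Ω S : Set (Fin d → ℝ)} {a : (Fin d → ℝ) → (Fin d → ℝ) → ℝ} {m M : ℝ}

/-! ### Integrability and duality for the integral operator -/

lemma integrable_kernel_prod (ha : Measurable (Function.uncurry a)) (hm : 0 < m)
    (hA2 : ∀ᵐ s ∂(volume.restrict S), ∀ᵐ t ∂(volume.restrict Ω), m ≤ a s t ∧ a s t ≤ M)
    {z u : (Fin d → ℝ) → ℝ} (hz : Integrable z (volume.restrict S))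
    (hu : Integrable u (volume.restrict Ω)) :
    Integrable (fun p : (Fin d → ℝ) × (Fin d → ℝ) => a p.1 p.2 * (z p.1 * u p.2))
      ((volume.restrict S).prod (volume.restrict Ω)) := by
  refine (hz.mul_prod hu).bdd_mul (c := M) ha.aestronglyMeasurable ?_
  have hms : MeasurableSet {p : (Fin d → ℝ) × (Fin d → ℝ) | ‖Function.uncurry a p‖ ≤ M} :=
    measurableSet_le ha.norm measurable_const
  refine (Measure.ae_prod_iff_ae_ae hms).2 ?_
  filter_upwards [hA2] with s hs
  filter_upwards [hs] with t ht
  simp only [Function.uncurry]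
  rw [Real.norm_of_nonneg (hm.le.trans ht.1)]
  exact ht.2

/-- Fubini's theorem as the duality between `opA` and `opAstar`. -/
lemma integral_mul_opA (ha : Measurable (Function.uncurry a)) (hm : 0 < m)
    (hA2 : ∀ᵐ s ∂(volume.restrict S), ∀ᵐ t ∂(volume.restrict Ω), m ≤ a s t ∧ a s t ≤ M)
    {z u : (Fin d → ℝ) → ℝ} (hz : Integrable z (volume.restrict S))
    (hu : Integrable u (volume.restrict Ω)) :
    ∫ s in S, z s * opA Ω a u s = ∫ t in Ω, u t * opAstar S a z t := by
  have h := integral_integral_swap (f := fun s t => a s t * (z s * u t))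
    (integrable_kernel_prod ha hm hA2 hz hu)
  have e1 : ∀ s, z s * opA Ω a u s = ∫ t in Ω, a s t * (z s * u t) := by
    intro s
    rw [opA, ← integral_const_mul]
    congr 1; ext t; ring
  have e2 : ∀ t, u t * opAstar S a z t = ∫ s in S, a s t * (z s * u t) := by
    intro t
    rw [opAstar, ← integral_const_mul]
    congr 1; ext s; ring
  simp only [e1, e2]
  exact h

lemma integrable_mul_opA (ha : Measurable (Function.uncurry a)) (hm : 0 < m)
    (hA2 : ∀ᵐ s ∂(volume.restrict S), ∀ᵐ t ∂(volume.restrict Ω), m ≤ a s t ∧ a s t ≤ M)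
    {z u : (Fin d → ℝ) → ℝ} (hz : Integrable z (volume.restrict S))
    (hu : Integrable u (volume.restrict Ω)) :
    Integrable (fun s => z s * opA Ω a u s) (volume.restrict S) := by
  refine (integrable_kernel_prod ha hm hA2 hz hu).integral_prod_left.congr (ae_of_all _ fun s => ?_)
  simp only [opA]
  rw [← integral_const_mul]
  congr 1; ext t; ring

lemma integrable_mul_opAstar (ha : Measurable (Function.uncurry a)) (hm : 0 < m)
    (hA2 : ∀ᵐ s ∂(volume.restrict S), ∀ᵐ t ∂(volume.restrict Ω), m ≤ a s t ∧ a s t ≤ M)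
    {z u : (Fin d → ℝ) → ℝ} (hz : Integrable z (volume.restrict S))
    (hu : Integrable u (volume.restrict Ω)) :
    Integrable (fun t => u t * opAstar S a z t) (volume.restrict Ω) := by
  refine (integrable_kernel_prod ha hm hA2 hz hu).integral_prod_right.congr
    (ae_of_all _ fun t => ?_)
  simp only [opAstar]
  rw [← integral_const_mul]
  congr 1; ext s; ring

lemma integrable_section (ha : Measurable (Function.uncurry a)) (hm : 0 < m)
    {s : Fin d → ℝ} (hs : ∀ᵐ t ∂(volume.restrict Ω), m ≤ a s t ∧ a s t ≤ M)
    {u : (Fin d → ℝ) → ℝ} (hu : Integrable u (volume.restrict Ω)) :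
    Integrable (fun t => a s t * u t) (volume.restrict Ω) := by
  refine hu.bdd_mul (c := M) (ha.comp measurable_prodMk_left).aestronglyMeasurable ?_
  filter_upwards [hs] with t ht
  rw [Real.norm_of_nonneg (hm.le.trans ht.1)]
  exact ht.2

/-! ### Pointwise bounds -/

lemma opA_bounds (ha : Measurable (Function.uncurry a)) (hm : 0 < m)
    (hA2 : ∀ᵐ s ∂(volume.restrict S), ∀ᵐ t ∂(volume.restrict Ω), m ≤ a s t ∧ a s t ≤ M)
    {x : (Fin d → ℝ) → ℝ} (hx : InDelta Ω x) :
    ∀ᵐ s ∂(volume.restrict S), m ≤ opA Ω a x s ∧ opA Ω a x s ≤ M := by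
  obtain ⟨hxi, hx0, hx1⟩ := hx
  filter_upwards [hA2] with s hs
  have hi := integrable_section ha hm hs hxi
  constructor
  · calc m = ∫ t in Ω, m * x t := by rw [integral_const_mul, hx1, mul_one]
      _ ≤ _ := by
        refine integral_mono_ae (hxi.const_mul m) hi ?_
        filter_upwards [hs, hx0] with t ht h0
        exact mul_le_mul_of_nonneg_right ht.1 h0
  · calc _ ≤ ∫ t in Ω, M * x t := by
          refine integral_mono_ae hi (hxi.const_mul M) ?_
          filter_upwards [hs, hx0] with t ht h0
          exact mul_le_mul_of_nonneg_right ht.2 h0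
      _ = M := by rw [integral_const_mul, hx1, mul_one]

/-- The multiplier `A*(y / A x)` of an EM step is bounded away from `0` and `∞`. -/
lemma multiplier_bounds (ha : Measurable (Function.uncurry a)) (hm : 0 < m) (hM : 0 < M)
    (hA2 : ∀ᵐ s ∂(volume.restrict S), ∀ᵐ t ∂(volume.restrict Ω), m ≤ a s t ∧ a s t ≤ M)
    {x y : (Fin d → ℝ) → ℝ} (hx : InDelta Ω x) (hy : InDelta S y)
    (hz : Integrable (fun s => y s / opA Ω a x s) (volume.restrict S)) :
    ∀ᵐ t ∂(volume.restrict Ω), m / M ≤ opAstar S a (fun s => y s / opA Ω a x s) t ∧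
      opAstar S a (fun s => y s / opA Ω a x s) t ≤ M / m := by
  obtain ⟨hyi, hy0, hy1⟩ := hy
  have hms : MeasurableSet {p : (Fin d → ℝ) × (Fin d → ℝ) | m ≤ a p.1 p.2 ∧ a p.1 p.2 ≤ M} :=
    (measurableSet_le measurable_const ha).inter (measurableSet_le ha measurable_const)
  have hsw := (Measure.ae_ae_comm (p := fun s t => m ≤ a s t ∧ a s t ≤ M) hms).1 hA2
  have hAb := opA_bounds ha hm hA2 hx
  filter_upwards [hsw] with t ht
  have hi : Integrable (fun s => a s t * (y s / opA Ω a x s)) (volume.restrict S) := by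
    refine hz.bdd_mul (c := M) (ha.comp measurable_prodMk_right).aestronglyMeasurable ?_
    filter_upwards [ht] with s hs
    rw [Real.norm_of_nonneg (hm.le.trans hs.1)]
    exact hs.2
  constructor
  · calc m / M = ∫ s in S, m / M * y s := by rw [integral_const_mul, hy1, mul_one]
      _ ≤ _ := by
        refine integral_mono_ae (hyi.const_mul _) hi ?_
        filter_upwards [ht, hy0, hAb] with s hs h0 hA
        have h0' : 0 ≤ y s := h0
        have hp : 0 < opA Ω a x s := hm.trans_le hA.1
        calc m / M * y s = m * (y s / M) := by ring
          _ ≤ a s t * (y s / opA Ω a x s) :=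
            mul_le_mul hs.1 (div_le_div_of_nonneg_left h0' hp hA.2) (by positivity)
              (hm.le.trans hs.1)
  · calc _ ≤ ∫ s in S, M / m * y s := by
          refine integral_mono_ae hi (hyi.const_mul _) ?_
          filter_upwards [ht, hy0, hAb] with s hs h0 hA
          have h0' : 0 ≤ y s := h0
          have hp : 0 < opA Ω a x s := hm.trans_le hA.1
          calc a s t * (y s / opA Ω a x s) ≤ M * (y s / m) :=
                mul_le_mul hs.2 (div_le_div_of_nonneg_left h0' hm hA.1) (by positivity) hM.le
            _ = M / m * y s := by ring
      _ = M / m := by rw [integral_const_mul, hy1, mul_one]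

/-! ### The inequality for one step -/

/-- Jensen's inequality for `log` and the density `a(s,·) x / (A x)(s)`. -/
lemma opA_mul_log_le (ha : Measurable (Function.uncurry a)) (hm : 0 < m)
    {s : Fin d → ℝ} (hs : ∀ᵐ t ∂(volume.restrict Ω), m ≤ a s t ∧ a s t ≤ M)
    {x q : (Fin d → ℝ) → ℝ} (hx0 : 0 ≤ᵐ[volume.restrict Ω] x)
    (hq : ∀ᵐ t ∂(volume.restrict Ω), 0 < q t)
    (hxi : Integrable x (volume.restrict Ω))
    (hxq : Integrable (fun t => x t * q t) (volume.restrict Ω))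
    (hxl : Integrable (fun t => x t * log (q t)) (volume.restrict Ω))
    (hA : 0 < opA Ω a x s) (hA' : 0 < opA Ω a (fun t => x t * q t) s) :
    opA Ω a (fun t => x t * log (q t)) s ≤
      opA Ω a x s * log (opA Ω a (fun t => x t * q t) s / opA Ω a x s) := by
  set c := opA Ω a (fun t => x t * q t) s / opA Ω a x s with hc
  have hcp : 0 < c := div_pos hA' hA
  have i1 := integrable_section ha hm hs hxi
  have i2 := integrable_section ha hm hs hxq
  -- Integrate the tangent-line bound `log q ≤ log c + q / c - 1` at the mean value `c` of `q`.
  calc opA Ω a (fun t => x t * log (q t)) s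
      ≤ ∫ t in Ω, ((log c - 1) * (a s t * x t) + c⁻¹ * (a s t * (x t * q t))) := by
        refine integral_mono_ae (integrable_section ha hm hs hxl)
          ((i1.const_mul _).add (i2.const_mul _)) ?_
        filter_upwards [hs, hx0, hq] with t ht h0 hqt
        have h0' : 0 ≤ x t := h0
        have h := Real.log_le_sub_one_of_pos (div_pos hqt hcp)
        rw [Real.log_div hqt.ne' hcp.ne'] at h
        have hax : 0 ≤ a s t * x t := mul_nonneg (hm.le.trans ht.1) h0'
        have h2 := mul_le_mul_of_nonneg_left h hax
        have e : q t / c = c⁻¹ * q t := by ring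
        rw [e] at h2
        linarith
    _ = (log c - 1) * opA Ω a x s + c⁻¹ * opA Ω a (fun t => x t * q t) s := by
        rw [integral_add (i1.const_mul _) (i2.const_mul _), integral_const_mul, integral_const_mul]
        rfl
    _ = opA Ω a x s * log c := by
        have : c⁻¹ * opA Ω a (fun t => x t * q t) s = opA Ω a x s := by
          rw [hc]; field_simp
        rw [this]; ring

lemma integrable_KL_integrand [IsFiniteMeasure (volume.restrict S)] (hm : 0 < m)
    {M' : ℝ} {y u : (Fin d → ℝ) → ℝ}
    (hy : Integrable y (volume.restrict S)) (hy0 : 0 ≤ᵐ[volume.restrict S] y)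
    (hyM : ∀ᵐ s ∂(volume.restrict S), y s ≤ M')
    (hu : Integrable u (volume.restrict S))
    (hub : ∀ᵐ s ∂(volume.restrict S), m ≤ u s ∧ u s ≤ M) :
    Integrable (fun s => y s * log (y s / u s)) (volume.restrict S) := by
  refine Integrable.of_bound (hy.aemeasurable.mul
    (hy.aemeasurable.div hu.aemeasurable).log).aestronglyMeasurable (M' * (M' / m) + M) ?_
  filter_upwards [hy0, hyM, hub] with s h0 h1 h2
  have h0' : 0 ≤ y s := h0
  have hup : 0 < u s := hm.trans_le h2.1
  have hM'0 : 0 ≤ M' := h0'.trans h1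
  have hM0 : 0 < M := hup.trans_le h2.2
  have hMM : 0 ≤ M' * (M' / m) := by positivity
  rcases h0'.eq_or_lt with h | hpos
  · rw [← h]; simp only [zero_mul, norm_zero]; linarith
  · have hr : 0 < y s / u s := div_pos hpos hup
    have hup1 : log (y s / u s) ≤ y s / u s :=
      (Real.log_le_sub_one_of_pos hr).trans (by linarith)
    have hlo : -log (y s / u s) ≤ u s / y s := by
      rw [← Real.log_inv, inv_div]
      exact (Real.log_le_sub_one_of_pos (div_pos hup hpos)).trans (by linarith)
    have hdm : y s / u s ≤ M' / m := div_le_div₀ hM'0 h1 hm h2.1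
    rw [Real.norm_eq_abs, abs_le]
    constructor
    · have := mul_le_mul_of_nonneg_left hlo h0'
      rw [mul_div_cancel₀ _ hpos.ne'] at this
      linarith [h2.2]
    · have := mul_le_mul h1 hdm hr.le hM'0
      have := mul_le_mul_of_nonneg_left hup1 h0'
      linarith

/-- One EM step stays in the simplex and decreases the data misfit by at least the
Kullback-Leibler length of the step. -/
lemma emStep_bound [IsFiniteMeasure (volume.restrict S)]
    (ha : Measurable (Function.uncurry a)) (hm : 0 < m) (hM : 0 < M)
    (hA2 : ∀ᵐ s ∂(volume.restrict S), ∀ᵐ t ∂(volume.restrict Ω), m ≤ a s t ∧ a s t ≤ M)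
    (hA1 : ∀ᵐ t ∂(volume.restrict Ω), (∫ s in S, a s t) = 1)
    {M' : ℝ} {x y : (Fin d → ℝ) → ℝ} (hx : InDelta Ω x) (hy : InDelta S y)
    (hyM : ∀ᵐ s ∂(volume.restrict S), y s ≤ M') :
    InDelta Ω (emStep Ω S a y x) ∧
    KL (volume.restrict Ω) (emStep Ω S a y x) x ≤
      KL (volume.restrict S) y (opA Ω a x) -
      KL (volume.restrict S) y (opA Ω a (emStep Ω S a y x)) := by
  have hx' := hx
  have hy' := hy
  obtain ⟨hxi, hx0, hx1⟩ := hx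
  obtain ⟨hyi, hy0, hy1⟩ := hy
  have h1 : Integrable (fun _ : Fin d → ℝ => (1 : ℝ)) (volume.restrict S) := integrable_const 1
  have hAi : ∀ {u : (Fin d → ℝ) → ℝ}, Integrable u (volume.restrict Ω) →
      Integrable (opA Ω a u) (volume.restrict S) := by
    intro u hu
    simpa using integrable_mul_opA ha hm hA2 h1 hu
  have hAmass : ∀ {u : (Fin d → ℝ) → ℝ}, Integrable u (volume.restrict Ω) →
      ∫ s in S, opA Ω a u s = ∫ t in Ω, u t := by
    intro u hu
    have h := integral_mul_opA ha hm hA2 h1 hu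
    simp only [one_mul] at h
    rw [h]
    refine integral_congr_ae ?_
    filter_upwards [hA1] with t ht
    simp [opAstar, ht]
  have hAb := opA_bounds ha hm hA2 hx'
  set z : (Fin d → ℝ) → ℝ := fun s => y s / opA Ω a x s with hz_def
  have hz : Integrable z (volume.restrict S) := by
    have : Integrable (fun s => y s * (opA Ω a x s)⁻¹) (volume.restrict S) := by
      refine hyi.mul_bdd (c := m⁻¹) (hAi hxi).aemeasurable.inv.aestronglyMeasurable ?_
      filter_upwards [hAb] with s hs
      have hp : 0 < opA Ω a x s := hm.trans_le hs.1
      rw [Real.norm_of_nonneg (inv_nonneg.2 hp.le)]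
      exact inv_anti₀ hm hs.1
    simpa only [hz_def, div_eq_mul_inv] using this
  set q := opAstar S a z with hq_def
  have hqb : ∀ᵐ t ∂(volume.restrict Ω), m / M ≤ q t ∧ q t ≤ M / m :=
    multiplier_bounds ha hm hM hA2 hx' hy' hz
  have hmM : 0 < m / M := div_pos hm hM
  have hqpos : ∀ᵐ t ∂(volume.restrict Ω), 0 < q t := by
    filter_upwards [hqb] with t ht using hmM.trans_le ht.1
  have hem : emStep Ω S a y x = fun t => x t * q t := rfl
  rw [hem]
  have hxq : Integrable (fun t => x t * q t) (volume.restrict Ω) :=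
    integrable_mul_opAstar ha hm hA2 hz hxi
  have hxq1 : ∫ t in Ω, x t * q t = 1 := by
    rw [hq_def, ← integral_mul_opA ha hm hA2 hz hxi, ← hy1]
    refine integral_congr_ae ?_
    filter_upwards [hAb] with s hs
    exact div_mul_cancel₀ _ (hm.trans_le hs.1).ne'
  have hD : InDelta Ω (fun t => x t * q t) := by
    refine ⟨hxq, ?_, hxq1⟩
    filter_upwards [hx0, hqpos] with t h0 hqt
    exact mul_nonneg h0 hqt.le
  refine ⟨hD, ?_⟩
  have hAb' := opA_bounds ha hm hA2 hD
  have hqm : AEStronglyMeasurable q (volume.restrict Ω) :=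
    (ha.comp measurable_swap).aestronglyMeasurable.mul
      (hz.aestronglyMeasurable.comp_snd (μ := volume.restrict Ω)) |>.integral_prod_right'
  have hlogm : AEStronglyMeasurable (fun t => log (q t)) (volume.restrict Ω) :=
    hqm.aemeasurable.log.aestronglyMeasurable
  have hlogb : ∀ᵐ t ∂(volume.restrict Ω), ‖log (q t)‖ ≤ log (M / m) := by
    filter_upwards [hqb] with t ht
    have hqt : 0 < q t := hmM.trans_le ht.1
    rw [Real.norm_eq_abs, abs_le]
    constructor
    · rw [← Real.log_inv, inv_div]
      exact Real.log_le_log hmM ht.1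
    · exact Real.log_le_log hqt ht.2
  have hxl : Integrable (fun t => x t * log (q t)) (volume.restrict Ω) :=
    hxi.mul_bdd hlogm hlogb
  have hxql : Integrable (fun t => x t * q t * log (q t)) (volume.restrict Ω) :=
    hxq.mul_bdd hlogm hlogb
  have hKLx : KL (volume.restrict Ω) (fun t => x t * q t) x =
      ∫ t in Ω, x t * q t * log (q t) := by
    have e : ∀ t, x t * q t * log (x t * q t / x t) - x t * q t + x t =
        x t * q t * log (q t) - x t * q t + x t := by
      intro t
      rcases eq_or_ne (x t) 0 with h | h
      · simp [h]
      · rw [mul_div_cancel_left₀ _ h]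
    simp only [KL, e]
    rw [integral_sub_add hxql hxq hxi, hxq1, hx1]
    ring
  have hL1 := integrable_KL_integrand hm hyi hy0 hyM (hAi hxi) hAb
  have hL2 := integrable_KL_integrand hm hyi hy0 hyM (hAi hxq) hAb'
  have hKLy : KL (volume.restrict S) y (opA Ω a x) -
      KL (volume.restrict S) y (opA Ω a (fun t => x t * q t)) =
      ∫ s in S, (y s * log (y s / opA Ω a x s) -
        y s * log (y s / opA Ω a (fun t => x t * q t) s)) := by
    rw [KL, KL, integral_sub_add hL1 hyi (hAi hxi), integral_sub_add hL2 hyi (hAi hxq),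
      integral_sub hL1 hL2, hAmass hxi, hAmass hxq, hx1, hxq1]
    ring
  rw [hKLx, hKLy]
  calc ∫ t in Ω, x t * q t * log (q t)
      = ∫ t in Ω, x t * log (q t) * opAstar S a z t := by
        refine integral_congr_ae (ae_of_all _ fun t => ?_)
        simp only [hq_def]; ring
    _ = ∫ s in S, z s * opA Ω a (fun t => x t * log (q t)) s :=
        (integral_mul_opA ha hm hA2 hz hxl).symm
    _ ≤ _ := by
        refine integral_mono_ae (integrable_mul_opA ha hm hA2 hz hxl) (hL1.sub hL2) ?_
        filter_upwards [hA2, hAb, hAb', hy0] with s hs hA hA' h0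
        have h0' : 0 ≤ y s := h0
        have hp : 0 < opA Ω a x s := hm.trans_le hA.1
        have hp' : 0 < opA Ω a (fun t => x t * q t) s := hm.trans_le hA'.1
        have hJ := opA_mul_log_le ha hm hs hx0 hqpos hxi hxq hxl hp hp'
        have hzs : 0 ≤ z s := div_nonneg h0' hp.le
        have hzA : z s * opA Ω a x s = y s := div_mul_cancel₀ _ hp.ne'
        refine (mul_le_mul_of_nonneg_left hJ hzs).trans (le_of_eq ?_)
        rw [← mul_assoc, hzA]
        rcases h0'.eq_or_lt with h | hpos
        · simp [← h]
        · simp only [Real.log_div hp'.ne' hp.ne', Real.log_div hpos.ne' hp.ne',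
            Real.log_div hpos.ne' hp'.ne']
          ring

end Kernel

/-! ### The iteration -/

/-- under (A1)-(A3) the OS-EM iterates satisfy
`d(x_{k+1}, x_k) ≤ f_{[k]}(x_k) - f_{[k]}(x_{k+1})`, where `[k] = k mod N`. -/
theorem osem_kl_step_bound
    {d : ℕ} (Ω S : Set (Fin d → ℝ))
    (hΩo : IsOpen Ω) (hΩb : Bornology.IsBounded Ω)
    (hSo : IsOpen S) (hSb : Bornology.IsBounded S)
    (N : ℕ) (hN : 0 < N)
    (a : ℕ → (Fin d → ℝ) → (Fin d → ℝ) → ℝ)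
    (y : ℕ → (Fin d → ℝ) → ℝ)
    (ha_meas : ∀ j < N, Measurable (Function.uncurry (a j)))
    (m M : ℝ) (hm : 0 < m)
    -- (A2)
    (hA2 : ∀ j < N, ∀ᵐ s ∂(volume.restrict S), ∀ᵐ t ∂(volume.restrict Ω),
      m ≤ a j s t ∧ a j s t ≤ M)
    -- (A1)
    (hA1 : ∀ j < N, ∀ᵐ t ∂(volume.restrict Ω), (∫ s in S, a j s t) = 1)
    (M' : ℝ) (hM' : 0 < M')
    (hy_int : ∀ j < N, Integrable (y j) (volume.restrict S))
    -- (A3)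
    (hA3 : ∀ j < N, (0 ≤ᵐ[volume.restrict S] y j) ∧ (∫ s in S, y j s) = 1 ∧
      (∀ᵐ s ∂(volume.restrict S), y j s ≤ M'))
    -- the OS-EM iteration
    (x : ℕ → (Fin d → ℝ) → ℝ)
    (hx0 : InDelta Ω (x 0))
    (hiter : ∀ k, x (k + 1) = emStep Ω S (a (k % N)) (y (k % N)) (x k)) :
    ∀ k, KL (volume.restrict Ω) (x (k + 1)) (x k) ≤
      KL (volume.restrict S) (y (k % N)) (opA Ω (a (k % N)) (x k)) -
      KL (volume.restrict S) (y (k % N)) (opA Ω (a (k % N)) (x (k + 1))) := by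
  have hfin : IsFiniteMeasure (volume.restrict S) :=
    ⟨by rw [Measure.restrict_apply_univ]; exact hSb.measure_lt_top⟩
  have hj : ∀ k, k % N < N := fun k => Nat.mod_lt k hN
  -- Enlarging the upper bound to `max M 1` makes it positive without any nonemptiness argument.
  have key : ∀ k, InDelta Ω (x k) → _ := fun k hk =>
    emStep_bound (ha_meas _ (hj k)) hm (lt_max_of_lt_right one_pos : 0 < max M 1)
      (by
        filter_upwards [hA2 _ (hj k)] with s hs
        filter_upwards [hs] with t ht using ⟨ht.1, ht.2.trans (le_max_left _ _)⟩)
      (hA1 _ (hj k)) hk ⟨hy_int _ (hj k), (hA3 _ (hj k)).1, (hA3 _ (hj k)).2.1⟩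
      (hA3 _ (hj k)).2.2
  have hx : ∀ k, InDelta Ω (x k) := by
    intro k
    induction k with
    | zero => exact hx0
    | succ k ih => rw [hiter k]; exact (key k ih).1
  intro k
  rw [hiter k]
  exact (key k (hx k)).2
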